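/- Let ℬ ⊆ ℕ be any set and for N ∈ ℕ let ℬ^(N) := {b ∈ ℬ : every prime factor of b is ≤ N} and ℬ̃^(N) := {b ∈ ℬ : b has no prime factor ≤ N}. Then lim_{N→∞} δ(M_{ℬ̃^(N)} ∖ M_{ℬ^(N)}) = 0, where each logarithmic density exists. -/

import Mathlib

open Filter Set Topology MeasureTheory

open scoped Classical

noncomputable section

/-- The set of multiples `M_B ⊆ ℤ` of a set `B ⊆ ℕ`. -/
def multiplesZ (B : Set ℕ) : Set ℤ := {n : ℤ | ∃ b ∈ B, (b : ℤ) ∣ n}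

/-- The `B`-free integers `F_B = ℤ ∖ M_B`. -/
def freeZ (B : Set ℕ) : Set ℤ := (multiplesZ B)ᶜ

/-- The logarithmically weighted averages `(1/log n) ∑_{k=1}^n 1_A(k)/k`. -/
def logWeight (A : Set ℤ) (n : ℕ) : ℝ :=
  (Real.log n)⁻¹ * ∑ k ∈ Finset.Icc 1 n, A.indicator (fun m : ℤ => ((m : ℝ))⁻¹) (k : ℤ)

/-- The lower logarithmic density of a set `A ⊆ ℤ`. -/
def logDensLow (A : Set ℤ) : ℝ := liminf (logWeight A) atTop

/-- `A ⊆ ℤ` has logarithmic density `d`. -/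
def HasLogDensity (A : Set ℤ) (d : ℝ) : Prop := Tendsto (logWeight A) atTop (𝓝 d)

/-- `B` is primitive: no element divides another one. -/
def Primitive (B : Set ℕ) : Prop := ∀ b ∈ B, ∀ b' ∈ B, b ∣ b' → b = b'

/-- `B` is Behrend: its set of multiples has logarithmic density one. -/
def IsBehrend (B : Set ℕ) : Prop := logDensLow (multiplesZ B) = 1

/-- `B` is taut: removing any element strictly decreases the logarithmic density
of the set of multiples. -/
def IsTaut (B : Set ℕ) : Prop :=
  ∀ b ∈ B, logDensLow (multiplesZ (B \ {b})) < logDensLow (multiplesZ B)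

/-- `B̃^(N)`: the elements of `B` having no prime factor `≤ N`. -/
def Btilde (B : Set ℕ) (N : ℕ) : Set ℕ := {b ∈ B | ∀ p : ℕ, p.Prime → p ∣ b → N < p}

/-- `B^(N)`: the elements of `B` all of whose prime factors are `≤ N`. -/
def Bsmooth (B : Set ℕ) (N : ℕ) : Set ℕ := {b ∈ B | ∀ p : ℕ, p.Prime → p ∣ b → p ≤ N}

/-- `n ↦ n^{-c}` as an arithmetic function. -/
def pw (c : ℝ) : ArithmeticFunction ℝ := ⟨fun n => if n = 0 then 0 else (n : ℝ) ^ (-c), by simp⟩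

lemma pw_apply (c : ℝ) {n : ℕ} (hn : n ≠ 0) : pw c n = (n : ℝ) ^ (-c) := by
  simp [pw, hn]

lemma pw_mul (c : ℝ) (m n : ℕ) : pw c (m * n) = pw c m * pw c n := by
  by_cases hm : m = 0
  · simp [hm]
  by_cases hn : n = 0
  · simp [hn]
  rw [pw_apply c hm, pw_apply c hn, pw_apply c (mul_ne_zero hm hn), Nat.cast_mul,
    Real.mul_rpow (Nat.cast_nonneg _) (Nat.cast_nonneg _)]

lemma pw_one (c : ℝ) : pw c 1 = 1 := by simp [pw]

lemma pw_mult (c : ℝ) : (pw c).IsMultiplicative := ⟨pw_one c, fun _ => pw_mul c _ _⟩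

/-- Möbius twisted by a power. -/
def mupw (c : ℝ) : ArithmeticFunction ℝ :=
  ArithmeticFunction.pmul (ArithmeticFunction.moebius : ArithmeticFunction ℝ) (pw c)

lemma mupw_mult (c : ℝ) : (mupw c).IsMultiplicative :=
  (ArithmeticFunction.isMultiplicative_moebius.intCast).pmul (pw_mult c)

lemma mupw_mul_pw (c : ℝ) : mupw c * pw c = 1 := by
  ext n
  rw [ArithmeticFunction.mul_apply]
  have h1 : ∀ x ∈ n.divisorsAntidiagonal, mupw c x.1 * pw c x.2 =
      ((ArithmeticFunction.moebius x.1 : ℤ) : ℝ) * 1 * pw c n := by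
    intro x hx
    rw [Nat.mem_divisorsAntidiagonal] at hx
    rw [← hx.1, pw_mul]
    simp [mupw]
    ring
  rw [Finset.sum_congr rfl h1, ← Finset.sum_mul]
  have h2 := congrArg (fun f => f n) (ArithmeticFunction.coe_moebius_mul_coe_zeta (R := ℝ))
  simp only [ArithmeticFunction.mul_apply] at h2
  have h3 : ∑ x ∈ n.divisorsAntidiagonal, ((ArithmeticFunction.moebius x.1 : ℤ) : ℝ) * 1 =
      (1 : ArithmeticFunction ℝ) n := by
    rw [← h2]
    refine Finset.sum_congr rfl fun x hx => ?_
    rw [Nat.mem_divisorsAntidiagonal] at hx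
    have : x.2 ≠ 0 := by rintro h; apply hx.2; rw [← hx.1, h, mul_zero]
    simp [this]
  rw [h3]
  by_cases hn : n = 1
  · simp [hn, pw_one]
  · simp [ArithmeticFunction.one_apply_ne hn]

/-- The Jordan-type totient quotient. -/
def Hf (c : ℝ) : ArithmeticFunction ℝ := mupw c * (ArithmeticFunction.zeta : ArithmeticFunction ℝ)

lemma Hf_mult (c : ℝ) : (Hf c).IsMultiplicative :=
  (mupw_mult c).mul ArithmeticFunction.isMultiplicative_zeta.natCast

lemma Hf_nonneg {c : ℝ} (hc : 0 ≤ c) (n : ℕ) : 0 ≤ Hf c n := by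
  by_cases hn : n = 0
  · simp [hn]
  rw [(Hf_mult c).multiplicative_factorization _ hn]
  refine Finset.prod_nonneg fun p hp => ?_
  have hpp : p.Prime := Nat.prime_of_mem_primeFactors (by simpa using hp)
  generalize n.factorization p = k
  show 0 ≤ Hf c (p ^ k)
  rw [Hf, ArithmeticFunction.coe_mul_zeta_apply, Nat.sum_divisors_prime_pow hpp]
  rcases k with _ | k
  · simp [(mupw_mult c).1]
  · rw [Finset.sum_range_succ', Finset.sum_range_succ']
    have : ∑ k ∈ Finset.range k, mupw c (p ^ (k + 1 + 1)) = 0 := by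
      refine Finset.sum_eq_zero fun i _ => ?_
      simp [mupw, ArithmeticFunction.moebius_apply_prime_pow hpp]
    rw [this]
    simp [(mupw_mult c).1]
    simp [mupw, ArithmeticFunction.moebius_apply_prime hpp, pw_apply c hpp.ne_zero]
    exact Real.rpow_le_one_of_one_le_of_nonpos (by exact_mod_cast hpp.one_le) (by linarith)

lemma pw_mul_Hf (c : ℝ) : pw c * Hf c = (ArithmeticFunction.zeta : ArithmeticFunction ℝ) := by
  rw [Hf, ← mul_assoc, mul_comm (pw c), mupw_mul_pw, one_mul]

lemma conv_exists {t s : ℝ} (h : t ≤ s) : ∃ g : ℕ → ℝ, (∀ n, 0 ≤ g n) ∧ ∀ n : ℕ, n ≠ 0 →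
    (n : ℝ) ^ (-t) = ∑ x ∈ n.divisorsAntidiagonal, (x.1 : ℝ) ^ (-s) * g x.2 := by
  refine ⟨fun e => (e : ℝ) ^ (-t) * Hf (s - t) e, fun n =>
    mul_nonneg (Real.rpow_nonneg (Nat.cast_nonneg _) _) (Hf_nonneg (by linarith) n), ?_⟩
  intro n hn
  have h1 := congrArg (fun f => f n) (pw_mul_Hf (s - t))
  simp only [ArithmeticFunction.mul_apply] at h1
  simp only [ArithmeticFunction.natCoe_apply, ArithmeticFunction.zeta_apply, hn, if_false,
    Nat.cast_one] at h1
  calc (n : ℝ) ^ (-t) = (n : ℝ) ^ (-t) * 1 := by ring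
    _ = _ := by
      rw [← h1, Finset.mul_sum]
      refine Finset.sum_congr rfl fun x hx => ?_
      rw [Nat.mem_divisorsAntidiagonal] at hx
      have hx1 : x.1 ≠ 0 := by rintro h; apply hx.2; rw [← hx.1, h, zero_mul]
      rw [pw_apply _ hx1, ← hx.1, Nat.cast_mul,
        Real.mul_rpow (Nat.cast_nonneg _) (Nat.cast_nonneg _)]
      have : (x.1 : ℝ) ^ (-s) = (x.1 : ℝ) ^ (-t) * (x.1 : ℝ) ^ (-(s - t)) := by
        rw [← Real.rpow_add (by positivity)]
        congr 1
        ring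
      rw [this]
      ring

/-- The weight `n^{-s}`. -/
def wt (s : ℝ) (n : ℕ+) : ENNReal := ENNReal.ofReal ((n : ℝ) ^ (-s))

/-- The Dirichlet series of a set. -/
def dser (A : Set ℤ) (s : ℝ) : ENNReal := ∑' n : ℕ+, if ((n : ℕ) : ℤ) ∈ A then wt s n else 0

/-- Zeta. -/
def zser (s : ℝ) : ENNReal := ∑' n : ℕ+, wt s n

lemma dser_le_zser (A : Set ℤ) (s : ℝ) : dser A s ≤ zser s := by
  refine ENNReal.tsum_le_tsum fun n => ?_
  split_ifs <;> simp

lemma dser_univ (s : ℝ) : dser Set.univ s = zser s := by simp [dser, zser]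

lemma dser_conv {t s : ℝ} {g : ℕ → ℝ} (hg : ∀ n, 0 ≤ g n) (hc : ∀ n : ℕ, n ≠ 0 →
    (n : ℝ) ^ (-t) = ∑ x ∈ n.divisorsAntidiagonal, (x.1 : ℝ) ^ (-s) * g x.2) (A : Set ℤ) :
    dser A t = ∑' d : ℕ+, ∑' e : ℕ+, if ((d : ℕ) : ℤ) * ((e : ℕ) : ℤ) ∈ A then
      wt s d * ENNReal.ofReal (g e) else 0 := by
  rw [← ENNReal.tsum_prod, ← sigmaAntidiagonalEquivProd.tsum_eq, ENNReal.tsum_sigma']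
  unfold dser
  refine tsum_congr fun n => ?_
  have key : ∀ b : ↥(n : ℕ).divisorsAntidiagonal,
      (if (((sigmaAntidiagonalEquivProd ⟨n, b⟩).1 : ℕ) : ℤ) *
        (((sigmaAntidiagonalEquivProd ⟨n, b⟩).2 : ℕ) : ℤ) ∈ A then
        wt s (sigmaAntidiagonalEquivProd ⟨n, b⟩).1 *
          ENNReal.ofReal (g (sigmaAntidiagonalEquivProd ⟨n, b⟩).2) else 0) =
      if ((n : ℕ) : ℤ) ∈ A then ENNReal.ofReal ((b.1.1 : ℝ) ^ (-s) * g b.1.2) else 0 := by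
    rintro ⟨⟨x, y⟩, hb⟩
    have hb' := Nat.mem_divisorsAntidiagonal.1 hb
    have h1 : (((sigmaAntidiagonalEquivProd ⟨n, ⟨(x, y), hb⟩⟩).1 : ℕ)) = x := rfl
    have h2 : (((sigmaAntidiagonalEquivProd ⟨n, ⟨(x, y), hb⟩⟩).2 : ℕ)) = y := rfl
    rw [wt, h1, h2, ← Nat.cast_mul, hb'.1, ENNReal.ofReal_mul (by positivity)]
  rw [tsum_congr key]
  split_ifs
  · rw [tsum_fintype, wt, hc n n.ne_zero, ENNReal.ofReal_sum_of_nonneg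
      (fun x _ => mul_nonneg (by positivity) (hg _))]
    exact (Finset.sum_coe_sort (n : ℕ).divisorsAntidiagonal
      (fun x => ENNReal.ofReal ((x.1 : ℝ) ^ (-s) * g x.2))).symm
  · simp

/-- Monotonicity of the zeta-distribution measure of an up-closed set. -/
lemma dser_mono {t s : ℝ} (h : t ≤ s) (B : Set ℕ) :
    dser (multiplesZ B) s * zser t ≤ dser (multiplesZ B) t * zser s := by
  obtain ⟨g, hg, hc⟩ := conv_exists h
  set G : ENNReal := ∑' e : ℕ+, ENNReal.ofReal (g e) with hG
  have h1 : zser t = zser s * G := by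
    rw [← dser_univ t, dser_conv hg hc]
    simp only [Set.mem_univ, if_true, ENNReal.tsum_mul_left, ENNReal.tsum_mul_right]
    rfl
  have h2 : dser (multiplesZ B) s * G ≤ dser (multiplesZ B) t := by
    rw [dser_conv hg hc, dser, ← ENNReal.tsum_mul_right]
    refine ENNReal.tsum_le_tsum fun d => ?_
    rw [hG, ← ENNReal.tsum_mul_left]
    refine ENNReal.tsum_le_tsum fun e => ?_
    split_ifs with h3 h4 h4
    · exact le_rfl
    · obtain ⟨b, hb, hd⟩ := h3
      exact absurd ⟨b, hb, hd.mul_right _⟩ h4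
    · simp
    · simp
  rw [h1, mul_comm (zser s) G, ← mul_assoc]
  gcongr

lemma zser_ne_zero (s : ℝ) : zser s ≠ 0 := by
  rw [zser, Ne, ENNReal.tsum_eq_zero]
  intro h
  have := h 1
  simp [wt] at this

lemma zser_le {s : ℝ} (hs : 1 < s) :
    zser s ≤ ENNReal.ofReal (∑' n : ℕ, 1 / (n : ℝ) ^ s) := by
  have hsum : Summable (fun n : ℕ => 1 / (n : ℝ) ^ s) := Real.summable_one_div_nat_rpow.2 hs
  rw [ENNReal.ofReal_tsum_of_nonneg (fun n => by positivity) hsum]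
  refine le_trans (le_of_eq ?_) (ENNReal.tsum_comp_le_tsum_of_injective PNat.coe_injective
    (fun n : ℕ => ENNReal.ofReal (1 / (n : ℝ) ^ s)))
  refine tsum_congr fun n => ?_
  rw [wt, Real.rpow_neg (by positivity), one_div]

lemma zser_ne_top {s : ℝ} (hs : 1 < s) : zser s ≠ ⊤ :=
  ne_top_of_le_ne_top ENNReal.ofReal_ne_top (zser_le hs)

/-- Truncation of `B`. -/
def trunc (B : Set ℕ) (K : ℕ) : Set ℕ := {b ∈ B | b ≤ K}

lemma multiplesZ_mono {B C : Set ℕ} (h : B ⊆ C) : multiplesZ B ⊆ multiplesZ C := by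
  rintro n ⟨b, hb, hd⟩
  exact ⟨b, h hb, hd⟩

lemma trunc_subset (B : Set ℕ) (K : ℕ) : trunc B K ⊆ B := fun _ h => h.1

lemma dser_le_iSup (B : Set ℕ) (s : ℝ) :
    dser (multiplesZ B) s ≤ ⨆ K : ℕ, dser (multiplesZ (trunc B K)) s := by
  unfold dser
  rw [ENNReal.tsum_eq_iSup_sum]
  refine iSup_le fun F => ?_
  refine le_trans ?_ (le_iSup _ (F.sup (fun n : ℕ+ => (n : ℕ))))
  refine le_trans ?_ (ENNReal.sum_le_tsum F)
  refine Finset.sum_le_sum fun n hn => ?_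
  split_ifs with h1 h2 h2
  · exact le_rfl
  · obtain ⟨b, hb, hd⟩ := h1
    exfalso
    refine h2 ⟨b, ⟨hb, ?_⟩, hd⟩
    have := Nat.le_of_dvd n.pos (Int.natCast_dvd_natCast.1 hd)
    exact this.trans (Finset.le_sup (f := fun n : ℕ+ => (n : ℕ)) hn)
  · simp
  · simp

lemma dser_split {A C : Set ℤ} (h : C ⊆ A) (s : ℝ) : dser A s = dser C s + dser (A \ C) s := by
  unfold dser
  rw [← ENNReal.tsum_add]
  refine tsum_congr fun n => ?_
  by_cases h1 : ((n : ℕ) : ℤ) ∈ C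
  · simp [h1, h h1]
  · simp [h1]

lemma dser_div_mono {t s : ℝ} (ht : 1 < t) (h : t ≤ s) (B : Set ℕ) :
    dser (multiplesZ B) s / zser s ≤ dser (multiplesZ B) t / zser t := by
  have hs := lt_of_lt_of_le ht h
  rw [ENNReal.div_le_iff (zser_ne_zero s) (zser_ne_top hs), div_eq_mul_inv, mul_assoc,
    mul_comm _ (zser s), ← mul_assoc, ← div_eq_mul_inv,
    ENNReal.le_div_iff_mul_le (Or.inl (zser_ne_zero t)) (Or.inl (zser_ne_top ht))]
  exact dser_mono h B

lemma key_dser (B : Set ℕ) {ε : ENNReal} (hε : ε ≠ 0) : ∃ K : ℕ, ∃ s₀ : ℝ, 1 < s₀ ∧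
    ∀ s, 1 < s → s ≤ s₀ →
      dser (multiplesZ B \ multiplesZ (trunc B K)) s ≤ ε * zser s := by
  let F : ℕ × {s : ℝ // 1 < s} → ENNReal :=
    fun x => dser (multiplesZ (trunc B x.1)) x.2.1 / zser x.2.1
  have : Nonempty (ℕ × {s : ℝ // 1 < s}) := ⟨(0, ⟨2, by norm_num⟩)⟩
  have hL : (⨆ x, F x) ≤ 1 := iSup_le fun x => by
    refine ENNReal.div_le_of_le_mul ?_
    rw [one_mul]
    exact dser_le_zser _ _
  have hL' : (⨆ x, F x) ≠ ⊤ := ne_top_of_le_ne_top ENNReal.one_ne_top hL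
  have h1 : (⨆ x, F x) < ⨆ x, F x + ε := by
    rw [← ENNReal.iSup_add]
    exact ENNReal.lt_add_right hL' hε
  obtain ⟨⟨K, s₀, hs₀⟩, hx⟩ := lt_iSup_iff.1 h1
  refine ⟨K, s₀, hs₀, fun s hs hss => ?_⟩
  have hz := zser_ne_zero s
  have hz' := zser_ne_top hs
  have h2 : dser (multiplesZ B) s ≤ (⨆ x, F x) * zser s := by
    refine (dser_le_iSup B s).trans (iSup_le fun k => ?_)
    rw [← ENNReal.div_le_iff hz hz']
    exact le_iSup F (k, ⟨s, hs⟩)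
  have h3 : (⨆ x, F x) ≤ dser (multiplesZ (trunc B K)) s / zser s + ε :=
    hx.le.trans (add_le_add_left (dser_div_mono hs hss _) _)
  have h4 : dser (multiplesZ B) s ≤ dser (multiplesZ (trunc B K)) s + ε * zser s := by
    refine h2.trans ((mul_le_mul_left h3 _).trans ?_)
    rw [add_mul, ENNReal.div_mul_cancel hz hz']
  rw [dser_split (multiplesZ_mono (trunc_subset B K)) s] at h4
  exact (ENNReal.add_le_add_iff_left
    (ne_top_of_le_ne_top hz' (dser_le_zser _ _))).1 h4

lemma zser_bound : ∃ s₁ : ℝ, 1 < s₁ ∧ ∀ s, 1 < s → s < s₁ →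
    zser s ≤ ENNReal.ofReal (2 / (s - 1)) := by
  have h := tendsto_sub_mul_tsum_nat_rpow.eventually (gt_mem_nhds (by norm_num : (1 : ℝ) < 2))
  obtain ⟨u, hu, hu'⟩ := (mem_nhdsGT_iff_exists_Ioo_subset).1 h
  refine ⟨u, hu, fun s hs hsu => (zser_le hs).trans (ENNReal.ofReal_le_ofReal ?_)⟩
  have h2 : (s - 1) * ∑' (n : ℕ), 1 / (n : ℝ) ^ s < 2 := hu' ⟨hs, hsu⟩
  rw [le_div_iff₀ (by linarith)]
  linarith

lemma sum_le_dser (A : Set ℤ) {n : ℕ} (hn : 2 ≤ n) :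
    ENNReal.ofReal (∑ k ∈ Finset.Icc 1 n, A.indicator (fun m : ℤ => ((m : ℝ))⁻¹) (k : ℤ)) ≤
      ENNReal.ofReal (Real.exp 1) * dser A (1 + 1 / Real.log n) := by
  have hlog : 0 < Real.log n := Real.log_pos (by exact_mod_cast hn)
  have hnn : ∀ k : ℕ, 0 ≤ A.indicator (fun m : ℤ => ((m : ℝ))⁻¹) (k : ℤ) := fun k =>
    Set.indicator_apply_nonneg fun _ => by positivity
  rw [ENNReal.ofReal_sum_of_nonneg fun k _ => hnn k]
  have h1 : ∑ k ∈ Finset.Icc 1 n, ENNReal.ofReal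
      (A.indicator (fun m : ℤ => ((m : ℝ))⁻¹) (k : ℤ)) =
      ∑ k ∈ (Finset.Icc 1 n).attach.map (⟨fun k => ⟨k.1, (Finset.mem_Icc.1 k.2).1⟩,
        fun a b hab => Subtype.ext (congrArg PNat.val hab)⟩ : ↥(Finset.Icc 1 n) ↪ ℕ+), ENNReal.ofReal
      (A.indicator (fun m : ℤ => ((m : ℝ))⁻¹) ((k : ℕ) : ℤ)) := by
    rw [Finset.sum_map]
    exact (Finset.sum_attach (Finset.Icc 1 n) (fun k : ℕ => ENNReal.ofReal
      (A.indicator (fun m : ℤ => ((m : ℝ))⁻¹) (k : ℤ)))).symm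
  rw [h1, dser, ← ENNReal.tsum_mul_left]
  refine le_trans (Finset.sum_le_sum fun k hk => ?_) (ENNReal.sum_le_tsum
    ((Finset.Icc 1 n).attach.map (⟨fun k => ⟨k.1, (Finset.mem_Icc.1 k.2).1⟩,
        fun a b hab => Subtype.ext (congrArg PNat.val hab)⟩ : ↥(Finset.Icc 1 n) ↪ ℕ+)))
  have hkn : (k : ℕ) ≤ n := by
    simp only [Finset.mem_map, Finset.mem_attach, true_and] at hk
    obtain ⟨⟨a, ha⟩, rfl⟩ := hk
    exact (Finset.mem_Icc.1 ha).2
  by_cases hA : ((k : ℕ) : ℤ) ∈ A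
  · rw [if_pos hA, Set.indicator_of_mem hA, wt, ← ENNReal.ofReal_mul (Real.exp_pos 1).le]
    refine ENNReal.ofReal_le_ofReal ?_
    have hk0 : (0 : ℝ) < (k : ℕ) := by exact_mod_cast k.pos
    rw [neg_add, Real.rpow_add hk0, Real.rpow_neg_one]
    have h2 : 1 ≤ Real.exp 1 * ((k : ℕ) : ℝ) ^ (-(1 / Real.log n)) := by
      rw [Real.rpow_def_of_pos hk0, ← Real.exp_add]
      refine Real.one_le_exp ?_
      have : Real.log ((k : ℕ) : ℝ) ≤ Real.log n := Real.log_le_log hk0 (by exact_mod_cast hkn)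
      have : Real.log ((k : ℕ) : ℝ) * (1 / Real.log n) ≤ 1 := by
        rw [mul_one_div, div_le_one hlog]; exact this
      linarith
    have h3 : (0 : ℝ) ≤ (((k : ℕ) : ℝ))⁻¹ := by positivity
    push_cast
    nlinarith
  · rw [Set.indicator_of_notMem hA]
    simp

lemma key_log (B : Set ℕ) {ε : ℝ} (hε : 0 < ε) : ∃ K : ℕ,
    ∀ᶠ n in atTop, logWeight (multiplesZ B \ multiplesZ (trunc B K)) n ≤ ε := by
  set η : ℝ := ε / (2 * Real.exp 1) with hη
  have hη0 : 0 < η := by positivity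
  obtain ⟨K, s₀, hs₀, hK⟩ := key_dser B (ε := ENNReal.ofReal η) (by simpa using hη0)
  obtain ⟨s₁, hs₁, hz⟩ := zser_bound
  refine ⟨K, ?_⟩
  have ht : Tendsto (fun n : ℕ => 1 + 1 / Real.log n) atTop (𝓝 (1 + 0)) := by
    refine tendsto_const_nhds.add ?_
    simp only [one_div]
    exact (Real.tendsto_log_atTop.comp tendsto_natCast_atTop_atTop).inv_tendsto_atTop
  rw [add_zero] at ht
  filter_upwards [ht.eventually (gt_mem_nhds hs₀), ht.eventually (gt_mem_nhds hs₁),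
    eventually_ge_atTop 2] with n h0 h1 hn
  have hlog : 0 < Real.log n := Real.log_pos (by exact_mod_cast hn)
  have h2 : 1 < 1 + 1 / Real.log n := by
    have : 0 < 1 / Real.log n := by positivity
    linarith
  have h3 := sum_le_dser (multiplesZ B \ multiplesZ (trunc B K)) hn
  have h4 := (hK _ h2 h0.le).trans (mul_le_mul_right (hz _ h2 h1) _)
  have h5 := h3.trans (mul_le_mul_right h4 _)
  rw [← ENNReal.ofReal_mul hη0.le, ← ENNReal.ofReal_mul (Real.exp_pos 1).le,
    ENNReal.ofReal_le_ofReal_iff] at h5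
  · unfold logWeight
    rw [inv_mul_le_iff₀ hlog]
    refine h5.trans (le_of_eq ?_)
    rw [hη]
    field_simp
    ring
  · rw [add_sub_cancel_left]
    positivity

lemma indic_nonneg (A : Set ℤ) (k : ℕ) :
    0 ≤ A.indicator (fun m : ℤ => ((m : ℝ))⁻¹) (k : ℤ) :=
  Set.indicator_apply_nonneg fun _ => by positivity

lemma log_inv_nonneg (n : ℕ) : 0 ≤ (Real.log n)⁻¹ := inv_nonneg.2 (Real.log_natCast_nonneg n)

lemma logWeight_nonneg (A : Set ℤ) (n : ℕ) : 0 ≤ logWeight A n :=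
  mul_nonneg (log_inv_nonneg n) (Finset.sum_nonneg fun k _ => indic_nonneg A k)

lemma logWeight_mono {A C : Set ℤ} (h : A ⊆ C) (n : ℕ) : logWeight A n ≤ logWeight C n := by
  refine mul_le_mul_of_nonneg_left (Finset.sum_le_sum fun k _ => ?_) (log_inv_nonneg n)
  by_cases hA : (k : ℤ) ∈ A
  · rw [Set.indicator_of_mem hA, Set.indicator_of_mem (h hA)]
  · rw [Set.indicator_of_notMem hA]
    exact indic_nonneg C k

lemma logWeight_union {A C D : Set ℤ} (h : A ⊆ C ∪ D) (n : ℕ) :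
    logWeight A n ≤ logWeight C n + logWeight D n := by
  unfold logWeight
  rw [← mul_add, ← Finset.sum_add_distrib]
  refine mul_le_mul_of_nonneg_left (Finset.sum_le_sum fun k _ => ?_) (log_inv_nonneg n)
  have hC := indic_nonneg C k
  have hD := indic_nonneg D k
  by_cases hA : (k : ℤ) ∈ A
  · rcases h hA with h1 | h1
    · rw [Set.indicator_of_mem hA, Set.indicator_of_mem h1]
      linarith
    · rw [Set.indicator_of_mem hA, Set.indicator_of_mem h1]
      linarith
  · rw [Set.indicator_of_notMem hA]
    linarith

/-- A periodic set has a logarithmic density. -/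
lemma periodic_logDensity (A : Set ℤ) (q : ℕ) (hq : 0 < q)
    (hA : ∀ n : ℤ, n + q ∈ A ↔ n ∈ A) : ∃ c, HasLogDensity A c := by
  let e : ℕ → ℝ := fun i => if ((i + 1 : ℕ) : ℤ) ∈ A then 1 else 0
  have he : ∀ i, e (i + q) = e i := by
    intro i
    have : (((i + q + 1 : ℕ) : ℤ)) = ((i + 1 : ℕ) : ℤ) + q := by push_cast; ring
    simp only [e, this, hA]
  let c : ℝ := (∑ i ∈ Finset.range q, e i) / q
  let z : ℕ → ℝ := fun i => e i - c
  have hq' : (q : ℝ) ≠ 0 := by positivity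
  have hzq : ∑ i ∈ Finset.range q, z i = 0 := by
    simp only [z, Finset.sum_sub_distrib, Finset.sum_const, Finset.card_range, nsmul_eq_mul, c]
    field_simp
    ring
  have hper : ∀ n, ∑ i ∈ Finset.range (n + q), z i = ∑ i ∈ Finset.range n, z i := by
    intro n
    induction n with
    | zero => simpa using hzq
    | succ n ih =>
      rw [show n + 1 + q = (n + q) + 1 by ring, Finset.sum_range_succ, ih, Finset.sum_range_succ]
      simp only [z, he]
  have hper' : Function.Periodic (fun n => ∑ i ∈ Finset.range n, z i) q := hper
  have hb : ∀ n, ‖∑ i ∈ Finset.range n, z i‖ ≤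
      ∑ m ∈ Finset.range q, ‖∑ i ∈ Finset.range m, z i‖ := by
    intro n
    have h1 := hper'.map_mod_nat n
    rw [← h1]
    exact Finset.single_le_sum (f := fun m => ‖∑ i ∈ Finset.range m, z i‖)
      (fun m _ => norm_nonneg _) (Finset.mem_range.2 (Nat.mod_lt n hq))
  have hanti : Antitone (fun i : ℕ => ((i : ℝ) + 1)⁻¹) := by
    intro a b hab
    have : (a : ℝ) ≤ b := by exact_mod_cast hab
    show ((b : ℝ) + 1)⁻¹ ≤ ((a : ℝ) + 1)⁻¹
    gcongr
  have h0 : Tendsto (fun i : ℕ => ((i : ℝ) + 1)⁻¹) atTop (𝓝 0) := by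
    simpa [one_div] using tendsto_one_div_add_atTop_nhds_zero_nat (𝕜 := ℝ)
  obtain ⟨l, hl⟩ := cauchySeq_tendsto_of_complete
    (hanti.cauchySeq_series_mul_of_tendsto_zero_of_bounded h0 hb)
  have hlog : Tendsto (fun n : ℕ => (Real.log n)⁻¹) atTop (𝓝 0) :=
    (Real.tendsto_log_atTop.comp tendsto_natCast_atTop_atTop).inv_tendsto_atTop
  have hmain := ((hlog.mul hl).add ((hlog.mul Real.tendsto_harmonic_sub_log).const_mul c)).add
    (tendsto_const_nhds (x := c))
  refine ⟨_, hmain.congr' ?_⟩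
  filter_upwards [eventually_ge_atTop 2] with n hn
  have hlogn : 0 < Real.log n := Real.log_pos (by exact_mod_cast hn)
  have hsum : ∑ k ∈ Finset.Icc 1 n, A.indicator (fun m : ℤ => ((m : ℝ))⁻¹) (k : ℤ) =
      ∑ i ∈ Finset.range n, ((i : ℝ) + 1)⁻¹ * e i := by
    have hI : Finset.Icc 1 n = Finset.Ico (0 + 1) (n + 1) := by
      ext x
      simp [Nat.lt_succ_iff]
    rw [hI, Finset.range_eq_Ico, ← Finset.sum_Ico_add'
      (fun k : ℕ => A.indicator (fun m : ℤ => ((m : ℝ))⁻¹) (k : ℤ)) 0 n 1]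
    · refine Finset.sum_congr rfl fun i _ => ?_
      by_cases h : ((i + 1 : ℕ) : ℤ) ∈ A
      · rw [Set.indicator_of_mem h]
        simp only [e, if_pos h]
        push_cast
        ring
      · rw [Set.indicator_of_notMem h]
        simp only [e, if_neg h]
        ring
  have hharm : ((harmonic n : ℚ) : ℝ) = ∑ i ∈ Finset.range n, ((i : ℝ) + 1)⁻¹ := by
    simp [harmonic]
  unfold logWeight
  rw [hsum, hharm]
  have hz : ∑ i ∈ Finset.range n, ((i : ℝ) + 1)⁻¹ • z i =
      ∑ i ∈ Finset.range n, ((i : ℝ) + 1)⁻¹ * e i -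
        c * ∑ i ∈ Finset.range n, ((i : ℝ) + 1)⁻¹ := by
    rw [Finset.mul_sum, ← Finset.sum_sub_distrib]
    refine Finset.sum_congr rfl fun i _ => ?_
    simp only [z, smul_eq_mul]
    ring
  rw [hz]
  field_simp
  ring

lemma mem_multiples_trunc_add {B : Set ℕ} (hB : 0 ∉ B) (K : ℕ) (n : ℤ) :
    n + (K.factorial : ℕ) ∈ multiplesZ (trunc B K) ↔ n ∈ multiplesZ (trunc B K) := by
  have h : ∀ b ∈ trunc B K, ((b : ℤ) ∣ n + (K.factorial : ℕ) ↔ (b : ℤ) ∣ n) := by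
    rintro b ⟨hb, hbK⟩
    have hb0 : 0 < b := Nat.pos_of_ne_zero (by rintro rfl; exact hB hb)
    exact dvd_add_left (Int.natCast_dvd_natCast.2 (Nat.dvd_factorial hb0 hbK))
  constructor
  · rintro ⟨b, hb, hd⟩
    exact ⟨b, hb, (h b hb).1 hd⟩
  · rintro ⟨b, hb, hd⟩
    exact ⟨b, hb, (h b hb).2 hd⟩

lemma trunc_mono (B : Set ℕ) {K L : ℕ} (h : K ≤ L) : trunc B K ⊆ trunc B L :=
  fun _ hb => ⟨hb.1, hb.2.trans h⟩

lemma exists_logDensity_diff (B : Set ℕ) (hB0 : 0 ∉ B) (C D : Set ℕ) (hC : C ⊆ B) (hD : D ⊆ B) :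
    ∃ d, HasLogDensity (multiplesZ C \ multiplesZ D) d := by
  have hC0 : 0 ∉ C := fun h => hB0 (hC h)
  have hD0 : 0 ∉ D := fun h => hB0 (hD h)
  refine cauchySeq_tendsto_of_complete (Metric.cauchySeq_iff'.2 fun ε hε => ?_)
  obtain ⟨K₁, h1⟩ := key_log C (ε := ε / 8) (by linarith)
  obtain ⟨K₂, h2⟩ := key_log D (ε := ε / 8) (by linarith)
  set K := max K₁ K₂
  set P := multiplesZ (trunc C K) \ multiplesZ (trunc D K) with hP
  obtain ⟨c, hc⟩ := periodic_logDensity P K.factorial K.factorial_pos (fun n => by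
    simp only [hP, Set.mem_sdiff, mem_multiples_trunc_add hC0, mem_multiples_trunc_add hD0])
  have hCC : multiplesZ (trunc C K₁) ⊆ multiplesZ (trunc C K) :=
    multiplesZ_mono (trunc_mono C (le_max_left _ _))
  have hDD : multiplesZ (trunc D K₂) ⊆ multiplesZ (trunc D K) :=
    multiplesZ_mono (trunc_mono D (le_max_right _ _))
  have hCK : multiplesZ (trunc C K) ⊆ multiplesZ C := multiplesZ_mono (trunc_subset _ _)
  have hDK : multiplesZ (trunc D K) ⊆ multiplesZ D := multiplesZ_mono (trunc_subset _ _)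
  have hu : ∀ n, logWeight (multiplesZ C \ multiplesZ D) n ≤
      logWeight P n + logWeight (multiplesZ C \ multiplesZ (trunc C K₁)) n := by
    refine logWeight_union ?_
    rintro x ⟨hx1, hx2⟩
    by_cases hx : x ∈ multiplesZ (trunc C K₁)
    · exact Or.inl ⟨hCC hx, fun h => hx2 (hDK h)⟩
    · exact Or.inr ⟨hx1, hx⟩
  have hl : ∀ n, logWeight P n ≤ logWeight (multiplesZ C \ multiplesZ D) n +
      logWeight (multiplesZ D \ multiplesZ (trunc D K₂)) n := by
    refine logWeight_union ?_
    rintro x ⟨hx1, hx2⟩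
    by_cases hx : x ∈ multiplesZ D
    · exact Or.inr ⟨hx, fun h => hx2 (hDD h)⟩
    · exact Or.inl ⟨hCK hx1, hx⟩
  have hc' := Metric.tendsto_nhds.1 hc (ε / 8) (by linarith)
  obtain ⟨N, hN⟩ := eventually_atTop.1 (h1.and (h2.and hc'))
  have hfin : ∀ n ≥ N, |logWeight (multiplesZ C \ multiplesZ D) n - c| ≤ ε / 4 := by
    intro n hn
    obtain ⟨a1, a2, a3⟩ := hN n hn
    rw [Real.dist_eq] at a3
    have := abs_lt.1 a3
    have := hu n
    have := hl n
    rw [abs_le]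
    constructor <;> linarith
  refine ⟨N, fun n hn => ?_⟩
  have b1 := abs_le.1 (hfin n hn)
  have b2 := abs_le.1 (hfin N le_rfl)
  rw [Real.dist_eq, abs_lt]
  constructor <;> linarith

/-- `lim_{N→∞} δ(M_{B̃^(N)} ∖ M_{B^(N)}) = 0`, and each of these logarithmic
densities exists. -/
theorem tendsto_logDensity_btilde_diff (B : Set ℕ) (hB0 : 0 ∉ B) :
    (∀ N : ℕ, HasLogDensity (multiplesZ (Btilde B N) \ multiplesZ (Bsmooth B N))
        (logDensLow (multiplesZ (Btilde B N) \ multiplesZ (Bsmooth B N)))) ∧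
      Tendsto (fun N : ℕ =>
          logDensLow (multiplesZ (Btilde B N) \ multiplesZ (Bsmooth B N))) atTop (𝓝 0) := by
  have hex := fun N => exists_logDensity_diff B hB0 (Btilde B N) (Bsmooth B N)
    (fun _ h => h.1) (fun _ h => h.1)
  have h1 : ∀ N : ℕ, HasLogDensity (multiplesZ (Btilde B N) \ multiplesZ (Bsmooth B N))
      (logDensLow (multiplesZ (Btilde B N) \ multiplesZ (Bsmooth B N))) := by
    intro N
    obtain ⟨d, hd⟩ := hex N
    have : logDensLow (multiplesZ (Btilde B N) \ multiplesZ (Bsmooth B N)) = d :=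
      Tendsto.liminf_eq hd
    rw [this]
    exact hd
  refine ⟨h1, ?_⟩
  rw [Metric.tendsto_atTop]
  intro ε hε
  obtain ⟨K, hK⟩ := key_log B (half_pos hε)
  refine ⟨K, fun N hN => ?_⟩
  have h0 : 0 ≤ logDensLow (multiplesZ (Btilde B N) \ multiplesZ (Bsmooth B N)) :=
    ge_of_tendsto' (h1 N) fun n => logWeight_nonneg _ n
  have h2 : logDensLow (multiplesZ (Btilde B N) \ multiplesZ (Bsmooth B N)) ≤ ε / 2 := by
    refine le_of_tendsto (h1 N) ?_
    filter_upwards [hK] with n hn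
    refine (logWeight_mono ?_ n).trans hn
    rintro x ⟨hx1, hx2⟩
    refine ⟨multiplesZ_mono (fun _ h => h.1) hx1, fun hx3 => hx2 (multiplesZ_mono ?_ hx3)⟩
    rintro b ⟨hb, hbK⟩
    refine ⟨hb, fun p _ hpb => ?_⟩
    have hb0 : 0 < b := Nat.pos_of_ne_zero (by rintro rfl; exact hB0 hb)
    exact (Nat.le_of_dvd hb0 hpb).trans (hbK.trans hN)
  rw [Real.dist_eq, sub_zero, abs_of_nonneg h0]
  linarith
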